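/- If I(α,β) > 1, then exact recovery in HSBM(n,p,q;k) is possible: there exists an estimator σ̂ mapping k-uniform hypergraphs on [n] to {±1}^n such that Pr_{(σ,ℋ)∼HSBM(n,p,q;k)}(σ̂(ℋ) ∉ {σ, −σ}) = o(1) as n → ∞. -/

import Mathlib

open Finset Filter Matrix

open scoped Classical

/-- The `k`-element subsets of `[n]`, i.e. the potential hyperedges. -/
abbrev KSet (n k : ℕ) := {e : Finset (Fin n) // e.card = k}

/-- A `±1` label vector (encoded by `Bool`) is balanced if it has equally many
`+1`'s (`true`) and `-1`'s (`false`). -/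
abbrev balanced {n : ℕ} (σ : Fin n → Bool) : Prop :=
  2 * (Finset.univ.filter (fun i => σ i = true)).card = n

/-- `e` is in-cluster w.r.t. `σ`: `σ` is constant on `e`. -/
abbrev inCluster {n : ℕ} (σ : Fin n → Bool) (e : Finset (Fin n)) : Prop :=
  ∀ i ∈ e, ∀ j ∈ e, σ i = σ j

/-- Probability that `e` appears as an edge, given the labels `σ`. -/
noncomputable def edgeP {n : ℕ} (p q : ℝ) (σ : Fin n → Bool) (e : Finset (Fin n)) : ℝ :=
  if inCluster σ e then p else q

/-- Probability of observing exactly the hypergraph with edge-indicator `E`, given labels `σ`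
(edges appear independently). -/
noncomputable def hypProb {n k : ℕ} (p q : ℝ) (σ : Fin n → Bool) (E : KSet n k → Bool) : ℝ :=
  ∏ e : KSet n k, if E e then edgeP p q σ e.1 else 1 - edgeP p q σ e.1

/-- Uniform prior on balanced label vectors. -/
noncomputable def sigProb (n : ℕ) (σ : Fin n → Bool) : ℝ :=
  if balanced σ then 1 / ((Finset.univ.filter (fun τ : Fin n → Bool => balanced τ)).card : ℝ)
  else 0

/-- Probability of an event `P` under the joint law `HSBM(n,p,q;k)` of `(σ, ℋ)`. -/
noncomputable def prEvent (n k : ℕ) (p q : ℝ)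
    (P : (Fin n → Bool) → (KSet n k → Bool) → Prop) : ℝ :=
  ∑ σ : Fin n → Bool, ∑ E : KSet n k → Bool,
    sigProb n σ * hypProb p q σ E * (if P σ E then 1 else 0)

/-- Global sign flip. -/
def negB {n : ℕ} (σ : Fin n → Bool) : Fin n → Bool := fun i => !(σ i)

/-- The edge probability parameter `α · log n / C(n-1, k-1)`. -/
noncomputable def pParam (k : ℕ) (α : ℝ) (n : ℕ) : ℝ :=
  α * Real.log n / ((n - 1).choose (k - 1) : ℝ)

/-!
Take the maximum likelihood estimator. If it errs at `σ`, then some balanced `τ ≠ σ` is at least as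
likely as `σ`, and since likelihoods are invariant under a global sign flip, `τ` may be chosen at
Hamming distance `d ≤ n / 2` from `σ`. The probability that `τ` beats `σ` is at most the
Bhattacharyya coefficient of the two edge laws, which tensorises over the `k`-sets and picks up a
factor `exp (-(√p - √q)² / 2)` from each `k`-set that is in-cluster for exactly one of `σ`, `τ`.
Joining a vertex on which `σ` and `τ` disagree to `k - 1` vertices on which both take the same value
gives at least `2 d C((n - d) / 2, k - 1)` such `k`-sets. So the coefficient is at most about
`n ^ (-d I(α, β))` when `d = o(n)`, and `n ^ (-c n)` for some `c > 0` when `d` is of order `n`.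
Since `I(α, β) > 1`, both contributions remain negligible when summed over all `τ`.
-/

open scoped Topology

/-! ### Bhattacharyya coefficients -/

section Bhattacharyya

/-- The Bhattacharyya coefficient `∑ √(P Q)` of two weight functions on a finite type, which bounds
the probability of confusing `P` with `Q` in a likelihood comparison. -/
noncomputable def bhattacharyya {Ω : Type*} [Fintype Ω] (P Q : Ω → ℝ) : ℝ :=
  ∑ ω, √(P ω * Q ω)

/-- The probability of the outcome `b` of a coin that shows `true` with probability `p`. -/
def coinProb (p : ℝ) (b : Bool) : ℝ :=
  if b then p else 1 - p

lemma coinProb_nonneg {p : ℝ} (hp : p ∈ Set.Icc 0 1) (b : Bool) : 0 ≤ coinProb p b := by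
  cases b
  · exact sub_nonneg.2 hp.2
  · exact hp.1

lemma bhattacharyya_nonneg {Ω : Type*} [Fintype Ω] (P Q : Ω → ℝ) : 0 ≤ bhattacharyya P Q :=
  sum_nonneg fun _ _ => Real.sqrt_nonneg _

lemma bhattacharyya_prod {ι : Type*} [Fintype ι] [DecidableEq ι] {Ω : ι → Type*}
    [∀ i, Fintype (Ω i)] {P Q : ∀ i, Ω i → ℝ} (hP : ∀ i ω, 0 ≤ P i ω) (hQ : ∀ i ω, 0 ≤ Q i ω) :
    bhattacharyya (fun ω : ∀ i, Ω i => ∏ i, P i (ω i)) (fun ω => ∏ i, Q i (ω i)) =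
      ∏ i, bhattacharyya (P i) (Q i) := by
  simp only [bhattacharyya, Fintype.prod_sum, ← prod_mul_distrib]
  exact sum_congr rfl fun ω _ => Real.sqrt_prod _ fun i _ => mul_nonneg (hP i _) (hQ i _)

lemma bhattacharyya_coinProb_le {p q : ℝ} (hp : p ∈ Set.Icc 0 1) (hq : q ∈ Set.Icc 0 1) :
    bhattacharyya (coinProb p) (coinProb q) ≤ Real.exp (-((√p - √q) ^ 2 / 2)) := by
  have am_gm : √((1 - p) * (1 - q)) ≤ ((1 - p) + (1 - q)) / 2 :=
    Real.sqrt_le_iff.2 ⟨by linarith [hp.2, hq.2], by nlinarith [sq_nonneg (p - q)]⟩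
  calc bhattacharyya (coinProb p) (coinProb q)
      = √p * √q + √((1 - p) * (1 - q)) := by
        simp [bhattacharyya, coinProb, Real.sqrt_mul hp.1]
    _ ≤ -((√p - √q) ^ 2 / 2) + 1 := by linarith [Real.sq_sqrt hp.1, Real.sq_sqrt hq.1]
    _ ≤ Real.exp (-((√p - √q) ^ 2 / 2)) := Real.add_one_le_exp _

lemma bhattacharyya_prod_coinProb_le {ι : Type*} [Fintype ι] [DecidableEq ι] {p q : ι → ℝ}
    (hp : ∀ i, p i ∈ Set.Icc 0 1) (hq : ∀ i, q i ∈ Set.Icc 0 1) :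
    bhattacharyya (fun E : ι → Bool => ∏ i, coinProb (p i) (E i))
        (fun E => ∏ i, coinProb (q i) (E i)) ≤
      Real.exp (-((∑ i, (√(p i) - √(q i)) ^ 2) / 2)) := by
  rw [bhattacharyya_prod (fun i => coinProb_nonneg (hp i)) (fun i => coinProb_nonneg (hq i)),
    sum_div, ← sum_neg_distrib, Real.exp_sum]
  exact prod_le_prod (fun _ _ => bhattacharyya_nonneg _ _)
    fun i _ => bhattacharyya_coinProb_le (hp i) (hq i)

lemma sum_mul_indicator_le_sum_bhattacharyya {Ω Θ : Type*} [Fintype Ω] {P : Ω → ℝ}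
    {Q : Θ → Ω → ℝ} {T : Finset Θ} {A : Ω → Prop} (hP : ∀ ω, 0 ≤ P ω)
    (hA : ∀ ω, A ω → ∃ θ ∈ T, P ω ≤ Q θ ω) :
    ∑ ω, P ω * (if A ω then 1 else 0) ≤ ∑ θ ∈ T, bhattacharyya P (Q θ) := by
  simp only [bhattacharyya]
  rw [sum_comm]
  refine sum_le_sum fun ω _ => ?_
  have hnonneg : ∀ θ ∈ T, 0 ≤ √(P ω * Q θ ω) := fun _ _ => Real.sqrt_nonneg _
  split_ifs with hω
  · obtain ⟨θ, hθ, hle⟩ := hA ω hω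
    calc P ω * 1 = √(P ω * P ω) := by rw [mul_one, Real.sqrt_mul_self (hP ω)]
      _ ≤ √(P ω * Q θ ω) := Real.sqrt_le_sqrt (mul_le_mul_of_nonneg_left hle (hP ω))
      _ ≤ ∑ θ ∈ T, √(P ω * Q θ ω) := single_le_sum hnonneg hθ
  · simpa only [mul_zero] using sum_nonneg hnonneg

end Bhattacharyya

/-! ### Label vectors and distinguishing sets -/

section Labels

variable {n : ℕ} {σ τ : Fin n → Bool}

lemma sum_pow_hammingDist {ι : Type*} [Fintype ι] [DecidableEq ι] {R : Type*} [CommSemiring R]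
    (σ : ι → Bool) (x : R) : ∑ τ : ι → Bool, x ^ hammingDist σ τ = (1 + x) ^ Fintype.card ι := by
  have hpow : ∀ τ : ι → Bool, x ^ hammingDist σ τ = ∏ i, if σ i ≠ τ i then x else 1 :=
    fun τ => by rw [← prod_filter, prod_const, hammingDist]
  have hcoord : ∀ i, ∑ b, (if σ i ≠ b then x else 1) = 1 + x := fun i => by
    cases σ i <;> simp [add_comm]
  simp only [hpow, ← Fintype.prod_sum (fun i b => if σ i ≠ b then x else 1), hcoord, prod_const,
    card_univ]

lemma hammingDist_add_hammingDist_negB (σ τ : Fin n → Bool) :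
    hammingDist σ τ + hammingDist σ (negB τ) = n := by
  have hcompl : hammingDist σ (negB τ) = #{i | ¬ σ i ≠ τ i} := by
    simp [hammingDist, negB]
  rw [hcompl, hammingDist, card_filter_add_card_filter_not, card_univ, Fintype.card_fin]

lemma negB_negB (σ : Fin n → Bool) : negB (negB σ) = σ := by
  funext i
  simp [negB]

lemma two_mul_card_filter_eq_of_balanced (hσ : balanced σ) (b : Bool) :
    2 * #{i | σ i = b} = n := by
  have htotal := card_filter_add_card_filter_not (s := (univ : Finset (Fin n))) (σ · = true)
  simp only [Bool.not_eq_true, card_univ, Fintype.card_fin] at htotal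
  cases b <;> unfold balanced at hσ <;> omega

lemma balanced_negB (hσ : balanced σ) : balanced (negB σ) := by
  simpa [balanced, negB] using two_mul_card_filter_eq_of_balanced hσ false

/-- The vertices to which both `σ` and `τ` give the label `b`. -/
def agreementSet (σ τ : Fin n → Bool) (b : Bool) : Finset (Fin n) :=
  {i | σ i = b ∧ τ i = b}

lemma mem_agreementSet {b : Bool} {i : Fin n} :
    i ∈ agreementSet σ τ b ↔ σ i = b ∧ τ i = b := by
  simp only [agreementSet, mem_filter, mem_univ, true_and]

lemma two_mul_card_agreementSet_add_hammingDist (σ τ : Fin n → Bool) (b : Bool) :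
    2 * #(agreementSet σ τ b) + hammingDist σ τ = #{i | σ i = b} + #{i | τ i = b} := by
  simp only [agreementSet, hammingDist, card_filter, mul_sum, ← sum_add_distrib]
  refine sum_congr rfl fun i _ => ?_
  cases σ i <;> cases τ i <;> cases b <;> rfl

lemma two_mul_card_agreementSet_add_hammingDist_of_balanced (hσ : balanced σ) (hτ : balanced τ)
    (b : Bool) : 2 * #(agreementSet σ τ b) + hammingDist σ τ = n := by
  have := two_mul_card_agreementSet_add_hammingDist σ τ b
  have := two_mul_card_filter_eq_of_balanced hσ b
  have := two_mul_card_filter_eq_of_balanced hτ b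
  omega

/-- The `k`-sets that are in-cluster with respect to exactly one of `σ` and `τ`, i.e. those whose
edge probability depends on which of the two is the true label vector. -/
noncomputable def distinguishingSets (k : ℕ) (σ τ : Fin n → Bool) : Finset (Finset (Fin n)) :=
  {e ∈ powersetCard k univ | ¬ (inCluster σ e ↔ inCluster τ e)}

lemma inCluster_insert_iff {S : Finset (Fin n)} {b : Bool} (hne : S.Nonempty)
    (hS : ∀ i ∈ S, σ i = b) (x : Fin n) : inCluster σ (insert x S) ↔ σ x = b := by
  obtain ⟨y, hy⟩ := hne
  refine ⟨fun h => (h x (mem_insert_self x S) y (mem_insert_of_mem hy)).trans (hS y hy),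
    fun hx => ?_⟩
  have hconst : ∀ i ∈ insert x S, σ i = b := forall_mem_insert _ _ _ |>.2 ⟨hx, hS⟩
  exact fun i hi j hj => (hconst i hi).trans (hconst j hj).symm

lemma insert_mem_distinguishingSets {k : ℕ} (hk : 2 ≤ k) {x : Fin n} (hx : σ x ≠ τ x) {b : Bool}
    {S : Finset (Fin n)} (hS : S ∈ powersetCard (k - 1) (agreementSet σ τ b)) :
    insert x S ∈ distinguishingSets k σ τ := by
  obtain ⟨hsub, hcard⟩ := mem_powersetCard.1 hS
  have hlabel : ∀ i ∈ S, σ i = b ∧ τ i = b := fun i hi => mem_agreementSet.1 (hsub hi)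
  have hxS : x ∉ S := fun h => hx ((hlabel x h).1.trans (hlabel x h).2.symm)
  have hne : S.Nonempty := card_pos.1 (by omega)
  rw [distinguishingSets, mem_filter, mem_powersetCard_univ, card_insert_of_notMem hxS,
    inCluster_insert_iff hne fun i hi => (hlabel i hi).1,
    inCluster_insert_iff hne fun i hi => (hlabel i hi).2]
  refine ⟨by omega, fun hiff => hx ?_⟩
  revert hiff
  cases σ x <;> cases τ x <;> cases b <;> simp

lemma filter_insert_of_subset_agreementSet {x : Fin n} (hx : σ x ≠ τ x) {b : Bool}
    {S : Finset (Fin n)} (hS : S ⊆ agreementSet σ τ b) :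
    {i ∈ insert x S | σ i ≠ τ i} = {x} ∧ {i ∈ insert x S | σ i = τ i} = S := by
  have hagree : ∀ i ∈ S, σ i = τ i := fun i hi =>
    have h := mem_agreementSet.1 (hS hi)
    h.1.trans h.2.symm
  rw [filter_insert, filter_insert, if_pos hx, if_neg hx, filter_true_of_mem hagree,
    filter_false_of_mem fun i hi => not_not.2 (hagree i hi)]
  exact ⟨rfl, rfl⟩

lemma hammingDist_mul_sum_choose_le_card_distinguishingSets {k : ℕ} (hk : 2 ≤ k)
    (σ τ : Fin n → Bool) :
    hammingDist σ τ * ∑ b, (#(agreementSet σ τ b)).choose (k - 1) ≤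
      #(distinguishingSets k σ τ) := by
  let pointed : Finset (Σ _ : Bool, Fin n × Finset (Fin n)) := univ.sigma fun b =>
    ({x | σ x ≠ τ x} : Finset (Fin n)) ×ˢ powersetCard (k - 1) (agreementSet σ τ b)
  have hpointed : #pointed = hammingDist σ τ * ∑ b, (#(agreementSet σ τ b)).choose (k - 1) := by
    simp only [pointed, card_sigma, card_product, card_powersetCard, mul_sum, hammingDist]
  rw [← hpointed]
  refine card_le_card_of_injOn (fun z => insert z.2.1 z.2.2) ?_ ?_
  · rintro ⟨b, x, S⟩ hz
    simp only [pointed, mem_coe, mem_sigma, mem_univ, true_and, mem_product, mem_filter] at hz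
    exact insert_mem_distinguishingSets hk hz.1 hz.2
  · rintro ⟨b, x, S⟩ hz ⟨c, y, T⟩ hw heq
    simp only [pointed, mem_coe, mem_sigma, mem_univ, true_and, mem_product, mem_filter,
      mem_powersetCard] at hz hw heq
    obtain ⟨hx, hS, hScard⟩ := hz
    obtain ⟨hy, hT, -⟩ := hw
    obtain ⟨hx', hS'⟩ := filter_insert_of_subset_agreementSet hx hS
    obtain ⟨hy', hT'⟩ := filter_insert_of_subset_agreementSet hy hT
    obtain rfl : S = T := by rw [← hS', ← hT', heq]
    obtain rfl : x = y := singleton_injective (by rw [← hx', ← hy', heq])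
    obtain ⟨i, hi⟩ : S.Nonempty := card_pos.1 (by omega)
    obtain rfl : b = c := (mem_agreementSet.1 (hS hi)).1.symm.trans (mem_agreementSet.1 (hT hi)).1
    rfl

end Labels

/-! ### Likelihoods -/

section Likelihood

variable {n k : ℕ} {p q : ℝ} {σ τ : Fin n → Bool}

lemma edgeP_mem_Icc (hp : p ∈ Set.Icc 0 1) (hq : q ∈ Set.Icc 0 1) (σ : Fin n → Bool)
    (e : Finset (Fin n)) : edgeP p q σ e ∈ Set.Icc 0 1 := by
  unfold edgeP
  split_ifs
  exacts [hp, hq]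

lemma hypProb_eq_prod_coinProb (p q : ℝ) (σ : Fin n → Bool) :
    hypProb p q σ = fun E : KSet n k → Bool => ∏ e, coinProb (edgeP p q σ e.1) (E e) :=
  rfl

lemma hypProb_nonneg (hp : p ∈ Set.Icc 0 1) (hq : q ∈ Set.Icc 0 1) (σ : Fin n → Bool)
    (E : KSet n k → Bool) : 0 ≤ hypProb p q σ E :=
  prod_nonneg fun e _ => coinProb_nonneg (edgeP_mem_Icc hp hq σ e.1) (E e)

lemma hypProb_negB (p q : ℝ) (σ : Fin n → Bool) (E : KSet n k → Bool) :
    hypProb p q (negB σ) E = hypProb p q σ E := by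
  simp only [hypProb, edgeP, inCluster, negB, Bool.not_inj_iff]

lemma sum_sq_sqrt_edgeP_sub (p q : ℝ) (σ τ : Fin n → Bool) :
    ∑ e : KSet n k, (√(edgeP p q σ e.1) - √(edgeP p q τ e.1)) ^ 2 =
      #(distinguishingSets k σ τ) * (√p - √q) ^ 2 := by
  have hedge : ∀ e, (√(edgeP p q σ e) - √(edgeP p q τ e)) ^ 2 =
      if ¬ (inCluster σ e ↔ inCluster τ e) then (√p - √q) ^ 2 else 0 := fun e => by
    unfold edgeP
    split_ifs <;> first | tauto | ring
  rw [← sum_subtype (powersetCard k univ) (by simp)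
    fun e => (√(edgeP p q σ e) - √(edgeP p q τ e)) ^ 2]
  simp only [hedge]
  rw [← sum_filter, sum_const, nsmul_eq_mul, distinguishingSets]

lemma bhattacharyya_hypProb_le (hp : p ∈ Set.Icc 0 1) (hq : q ∈ Set.Icc 0 1)
    (σ τ : Fin n → Bool) :
    bhattacharyya (hypProb (k := k) p q σ) (hypProb p q τ) ≤
      Real.exp (-(#(distinguishingSets k σ τ) * (√p - √q) ^ 2 / 2)) := by
  rw [hypProb_eq_prod_coinProb, hypProb_eq_prod_coinProb, ← sum_sq_sqrt_edgeP_sub]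
  exact bhattacharyya_prod_coinProb_le (fun e => edgeP_mem_Icc hp hq σ e.1)
    fun e => edgeP_mem_Icc hp hq τ e.1

lemma sigProb_nonneg (σ : Fin n → Bool) : 0 ≤ sigProb n σ := by
  unfold sigProb
  positivity

lemma sum_sigProb_le_one (n : ℕ) : ∑ σ, sigProb n σ ≤ 1 := by
  simp only [sigProb]
  rw [← sum_filter, sum_const, nsmul_eq_mul, mul_one_div]
  exact div_self_le_one _

lemma prEvent_nonneg (hp : p ∈ Set.Icc 0 1) (hq : q ∈ Set.Icc 0 1)
    (P : (Fin n → Bool) → (KSet n k → Bool) → Prop) : 0 ≤ prEvent n k p q P :=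
  sum_nonneg fun σ _ => sum_nonneg fun E _ =>
    mul_nonneg (mul_nonneg (sigProb_nonneg σ) (hypProb_nonneg hp hq σ E)) (by positivity)

lemma prEvent_le_of_forall_balanced {P : (Fin n → Bool) → (KSet n k → Bool) → Prop} {R : ℝ}
    (hR : 0 ≤ R)
    (hP : ∀ σ, balanced σ → ∑ E, hypProb p q σ E * (if P σ E then 1 else 0) ≤ R) :
    prEvent n k p q P ≤ R := by
  calc prEvent n k p q P
      = ∑ σ, sigProb n σ * ∑ E, hypProb p q σ E * (if P σ E then 1 else 0) := by
        simp only [prEvent, mul_sum, mul_assoc]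
    _ ≤ ∑ σ, sigProb n σ * R := sum_le_sum fun σ _ => by
        by_cases hσ : balanced σ
        · exact mul_le_mul_of_nonneg_left (hP σ hσ) (sigProb_nonneg σ)
        · simp only [sigProb, if_neg hσ, zero_mul, le_refl]
    _ ≤ R := by
        rw [← sum_mul]
        exact mul_le_of_le_one_left hR (sum_sigProb_le_one n)

end Likelihood

/-! ### Maximum likelihood estimation -/

section MaximumLikelihood

variable {n k : ℕ} {p q : ℝ} {σ : Fin n → Bool}

/-- `est` is a maximum likelihood estimator: it picks a balanced label vector under which the
observed hypergraph is most likely. For odd `n` there are no balanced label vectors, and every `est`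
qualifies. -/
def IsMLE (p q : ℝ) (est : (KSet n k → Bool) → Fin n → Bool) : Prop :=
  ∀ E σ, balanced σ → balanced (est E) ∧ hypProb p q σ E ≤ hypProb p q (est E) E

lemma exists_isMLE (n k : ℕ) (p q : ℝ) :
    ∃ est : (KSet n k → Bool) → Fin n → Bool, IsMLE p q est := by
  suffices ∀ E : KSet n k → Bool, ∃ τ : Fin n → Bool, ∀ σ, balanced σ →
      balanced τ ∧ hypProb p q σ E ≤ hypProb p q τ E by
    choose est hest using this
    exact ⟨est, hest⟩
  intro E
  by_cases hne : ∃ σ : Fin n → Bool, balanced σ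
  · obtain ⟨τ, hτ, hmax⟩ :=
      Set.exists_max_image {σ | balanced σ} (hypProb p q · E) (Set.toFinite _) hne
    exact ⟨τ, fun σ hσ => ⟨hτ, hmax σ hσ⟩⟩
  · exact ⟨fun _ => true, fun σ hσ => absurd ⟨σ, hσ⟩ hne⟩

/-- The label vectors with which a maximum likelihood estimator may confuse `σ`: up to a global
sign flip, every wrong balanced label vector agrees with `σ` on at least half of the vertices. -/
noncomputable def competitors (σ : Fin n → Bool) : Finset (Fin n → Bool) :=
  {τ | balanced τ ∧ τ ≠ σ ∧ 2 * hammingDist σ τ ≤ n}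

lemma mem_competitors {τ : Fin n → Bool} :
    τ ∈ competitors σ ↔ balanced τ ∧ τ ≠ σ ∧ 2 * hammingDist σ τ ≤ n := by
  simp only [competitors, mem_filter, mem_univ, true_and]

lemma IsMLE.exists_competitor {est : (KSet n k → Bool) → Fin n → Bool} (hest : IsMLE p q est)
    (hσ : balanced σ) {E : KSet n k → Bool} (hE : est E ≠ σ ∧ est E ≠ negB σ) :
    ∃ τ ∈ competitors σ, hypProb p q σ E ≤ hypProb p q τ E := by
  obtain ⟨hbal, hle⟩ := hest E σ hσ
  by_cases hclose : 2 * hammingDist σ (est E) ≤ n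
  · exact ⟨est E, mem_competitors.2 ⟨hbal, hE.1, hclose⟩, hle⟩
  · refine ⟨negB (est E), mem_competitors.2 ⟨balanced_negB hbal, ?_, ?_⟩, by rwa [hypProb_negB]⟩
    · rintro rfl
      exact hE.2 (negB_negB _).symm
    · have := hammingDist_add_hammingDist_negB σ (est E)
      omega

lemma sum_competitors_le {x y : ℝ} (hx : 0 ≤ x) (hy : 0 ≤ y) (σ : Fin n → Bool) :
    ∑ τ ∈ competitors σ, (x ^ hammingDist σ τ + y) ≤ ((1 + x) ^ n - 1) + 2 ^ n * y := by
  have hsum : ∑ τ ∈ univ.erase σ, x ^ hammingDist σ τ = (1 + x) ^ n - 1 := by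
    have htotal := sum_pow_hammingDist σ x
    rw [← sum_erase_add _ _ (mem_univ σ), hammingDist_self, pow_zero, Fintype.card_fin] at htotal
    exact eq_sub_of_add_eq htotal
  calc ∑ τ ∈ competitors σ, (x ^ hammingDist σ τ + y)
      ≤ ∑ τ ∈ univ.erase σ, (x ^ hammingDist σ τ + y) :=
        sum_le_sum_of_subset_of_nonneg
          (fun τ hτ => mem_erase.2 ⟨(mem_competitors.1 hτ).2.1, mem_univ τ⟩)
          fun _ _ _ => by positivity
    _ = ((1 + x) ^ n - 1) + ∑ _τ ∈ univ.erase σ, y := by rw [sum_add_distrib, hsum]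
    _ ≤ ((1 + x) ^ n - 1) + ∑ _τ : Fin n → Bool, y := by
        gcongr
        exact erase_subset σ univ
    _ = ((1 + x) ^ n - 1) + 2 ^ n * y := by simp

lemma IsMLE.prEvent_error_le {est : (KSet n k → Bool) → Fin n → Bool} (hest : IsMLE p q est)
    (hp : p ∈ Set.Icc 0 1) (hq : q ∈ Set.Icc 0 1) {x y : ℝ} (hx : 0 ≤ x) (hy : 0 ≤ y)
    (hxy : ∀ σ τ : Fin n → Bool, balanced σ → balanced τ → 2 * hammingDist σ τ ≤ n →
      bhattacharyya (hypProb (k := k) p q σ) (hypProb p q τ) ≤ x ^ hammingDist σ τ + y) :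
    prEvent n k p q (fun σ E => est E ≠ σ ∧ est E ≠ negB σ) ≤
      ((1 + x) ^ n - 1) + 2 ^ n * y := by
  have hone : 1 ≤ (1 + x) ^ n := one_le_pow₀ (le_add_of_nonneg_right hx)
  refine prEvent_le_of_forall_balanced (add_nonneg (sub_nonneg.2 hone) (by positivity))
    fun σ hσ => ?_
  calc _ ≤ ∑ τ ∈ competitors σ, bhattacharyya (hypProb (k := k) p q σ) (hypProb p q τ) :=
        sum_mul_indicator_le_sum_bhattacharyya (hypProb_nonneg hp hq σ)
          fun E hE => hest.exists_competitor hσ hE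
    _ ≤ ∑ τ ∈ competitors σ, (x ^ hammingDist σ τ + y) := sum_le_sum fun τ hτ =>
        have ⟨hτ_bal, _, hclose⟩ := mem_competitors.1 hτ
        hxy σ τ hσ hτ_bal hclose
    _ ≤ ((1 + x) ^ n - 1) + 2 ^ n * y := sum_competitors_le hx hy σ

end MaximumLikelihood

/-! ### The exponent of the Bhattacharyya coefficient -/

section Exponent

lemma pow_mul_choose_le_choose {a N s : ℕ} {ρ : ℝ} (hρ : 0 ≤ ρ) (h : ρ * N + s ≤ a) :
    ρ ^ s * N.choose s ≤ a.choose s := by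
  have hsub : ρ * N ≤ ((a + 1 - s : ℕ) : ℝ) := by
    have hsa : s ≤ a + 1 := by
      have : (s : ℝ) ≤ (a : ℝ) := by nlinarith [mul_nonneg hρ N.cast_nonneg]
      exact (Nat.cast_le.1 this).trans a.le_succ
    rw [Nat.cast_sub hsa]
    push_cast
    linarith
  calc ρ ^ s * N.choose s
      ≤ ρ ^ s * (N ^ s / s.factorial) := by gcongr; exact Nat.choose_le_pow_div s N
    _ = (ρ * N) ^ s / s.factorial := by ring
    _ ≤ ((a + 1 - s : ℕ) : ℝ) ^ s / s.factorial := by gcongr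
    _ ≤ a.choose s := Nat.pow_le_choose s a

lemma sq_sqrt_pParam_sub (k n : ℕ) {α β : ℝ} (hα : 0 ≤ α) (hβ : 0 ≤ β) :
    (√(pParam k α n) - √(pParam k β n)) ^ 2 =
      (√α - √β) ^ 2 * (Real.log n / (n - 1).choose (k - 1)) := by
  rw [pParam, pParam, mul_div_assoc, mul_div_assoc, Real.sqrt_mul hα, Real.sqrt_mul hβ, ← sub_mul,
    mul_pow, Real.sq_sqrt (div_nonneg (Real.log_natCast_nonneg n) (Nat.cast_nonneg _))]

variable {n k : ℕ} {α β ρ : ℝ} {σ τ : Fin n → Bool}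

lemma hammingDist_mul_pow_mul_choose_le_card_distinguishingSets (hk : 2 ≤ k) (hρ : 0 ≤ ρ)
    (hσ : balanced σ) (hτ : balanced τ)
    (hn : ρ * n + (k - 1 : ℕ) ≤ ((n : ℝ) - hammingDist σ τ) / 2) :
    hammingDist σ τ * (2 * (ρ ^ (k - 1) * (n - 1).choose (k - 1))) ≤
      #(distinguishingSets k σ τ) := by
  have hclass : ∀ b, ρ ^ (k - 1) * ((n - 1).choose (k - 1) : ℝ) ≤
      (#(agreementSet σ τ b)).choose (k - 1) := fun b => by
    have hcard : (2 * #(agreementSet σ τ b) + hammingDist σ τ : ℝ) = n := by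
      exact_mod_cast two_mul_card_agreementSet_add_hammingDist_of_balanced hσ hτ b
    have hpred : ρ * (n - 1 : ℕ) ≤ ρ * n := by gcongr; exact n.sub_le 1
    exact pow_mul_choose_le_choose hρ (by linarith)
  calc (hammingDist σ τ * (2 * (ρ ^ (k - 1) * (n - 1).choose (k - 1))) : ℝ)
      = hammingDist σ τ * ∑ _b : Bool, ρ ^ (k - 1) * ((n - 1).choose (k - 1) : ℝ) := by
        simp [two_mul]
    _ ≤ hammingDist σ τ * ∑ b, ((#(agreementSet σ τ b)).choose (k - 1) : ℝ) := by
        gcongr with b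
        exact hclass b
    _ ≤ #(distinguishingSets k σ τ) := by
        exact_mod_cast hammingDist_mul_sum_choose_le_card_distinguishingSets hk σ τ

lemma bhattacharyya_hypProb_pParam_le (hk : 2 ≤ k) (hα : 0 ≤ α) (hβ : 0 ≤ β)
    (hp : pParam k α n ∈ Set.Icc 0 1) (hq : pParam k β n ∈ Set.Icc 0 1) (hρ : 0 ≤ ρ)
    (hσ : balanced σ) (hτ : balanced τ)
    (hn : ρ * n + (k - 1 : ℕ) ≤ ((n : ℝ) - hammingDist σ τ) / 2) :
    bhattacharyya (hypProb (k := k) (pParam k α n) (pParam k β n) σ)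
        (hypProb (pParam k α n) (pParam k β n) τ) ≤
      ((n : ℝ) ^ (-((√α - √β) ^ 2 * ρ ^ (k - 1)))) ^ hammingDist σ τ := by
  have hkn : k - 1 < n := by
    have : ((k - 1 : ℕ) : ℝ) < n := by
      have : (1 : ℝ) ≤ (k - 1 : ℕ) := by exact_mod_cast (by omega : 1 ≤ k - 1)
      have : 0 ≤ ρ * n := by positivity
      linarith [(hammingDist σ τ).cast_nonneg (α := ℝ)]
    exact_mod_cast this
  have hchoose : (0 : ℝ) < (n - 1).choose (k - 1) := by
    exact_mod_cast Nat.choose_pos (by omega)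
  refine (bhattacharyya_hypProb_le hp hq σ τ).trans ?_
  rw [Real.rpow_def_of_pos (Nat.cast_pos.2 (Nat.zero_lt_of_lt hkn)), ← Real.exp_nat_mul,
    Real.exp_le_exp, sq_sqrt_pParam_sub k n hα hβ]
  have hexponent :
      hammingDist σ τ * (Real.log n * ((√α - √β) ^ 2 * ρ ^ (k - 1))) ≤
        #(distinguishingSets k σ τ) *
          ((√α - √β) ^ 2 * (Real.log n / (n - 1).choose (k - 1))) / 2 := by
    calc hammingDist σ τ * (Real.log n * ((√α - √β) ^ 2 * ρ ^ (k - 1)))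
        = hammingDist σ τ * (2 * (ρ ^ (k - 1) * (n - 1).choose (k - 1))) *
            ((√α - √β) ^ 2 * (Real.log n / (n - 1).choose (k - 1))) / 2 := by field_simp
      _ ≤ _ := by
        gcongr
        exact hammingDist_mul_pow_mul_choose_le_card_distinguishingSets hk hρ hσ hτ hn
  linarith

end Exponent

/-! ### Asymptotics -/

section Asymptotics

lemma tendsto_pParam_zero {k : ℕ} (hk : 2 ≤ k) (α : ℝ) :
    Tendsto (fun n => pParam k α n) atTop (𝓝 0) := by
  have hcast : Tendsto (fun n : ℕ => (n : ℝ)) atTop atTop := tendsto_natCast_atTop_atTop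
  have hsucc : (fun n : ℕ => ((n + 1 : ℕ) : ℝ)) =O[atTop] fun n : ℕ => (n : ℝ) := by
    simp only [Nat.cast_succ]
    exact (Asymptotics.isBigO_refl _ _).add
      ((Asymptotics.isLittleO_const_id_atTop (1 : ℝ)).comp_tendsto hcast).isBigO
  have hpow : (fun n : ℕ => (n : ℝ)) =O[atTop] fun n : ℕ => (n : ℝ) ^ (k - 1) := by
    refine .of_norm_eventuallyLE ?_
    filter_upwards [eventually_ge_atTop 1] with n hn
    rw [Real.norm_natCast]
    exact le_self_pow₀ (Nat.one_le_cast.2 hn) (by omega)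
  have hlog : (fun n : ℕ => Real.log (n + 1 : ℕ)) =o[atTop] fun n : ℕ => ((n + 1 : ℕ) : ℝ) :=
    Real.isLittleO_log_id_atTop.comp_tendsto (hcast.comp (tendsto_add_atTop_nat 1))
  have hratio := ((hlog.trans_isBigO hsucc).trans_isBigO hpow).trans_isTheta
    (isTheta_choose (k - 1)).symm
  rw [← tendsto_add_atTop_iff_nat 1]
  simpa only [pParam, mul_div_assoc, Nat.add_sub_cancel, mul_zero] using
    hratio.tendsto_div_nhds_zero.const_mul α

lemma eventually_pParam_mem_Icc {k : ℕ} (hk : 2 ≤ k) {α : ℝ} (hα : 0 ≤ α) :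
    ∀ᶠ n in atTop, pParam k α n ∈ Set.Icc 0 1 := by
  filter_upwards [(tendsto_pParam_zero hk α).eventually_le_const zero_lt_one] with n hn
  exact ⟨div_nonneg (mul_nonneg hα (Real.log_natCast_nonneg n)) (Nat.cast_nonneg _), hn⟩

lemma exists_lt_half_one_lt_mul_pow {J : ℝ} {s : ℕ} (hJ : 1 < J / 2 ^ s) :
    ∃ ρ : ℝ, 0 < ρ ∧ ρ < 1 / 2 ∧ 1 < J * ρ ^ s := by
  have hcont : Tendsto (fun ρ : ℝ => J * ρ ^ s) (𝓝[<] (1 / 2)) (𝓝 (J * (1 / 2) ^ s)) :=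
    ((continuous_const.mul (continuous_pow s)).tendsto _).mono_left nhdsWithin_le_nhds
  have hhalf : 1 < J * (1 / 2) ^ s := by rwa [_root_.one_div_pow, mul_one_div]
  obtain ⟨ρ, hlt, hρ⟩ := ((hcont.eventually_const_lt hhalf).and
    (Ioo_mem_nhdsLT (by norm_num : (0 : ℝ) < 1 / 2))).exists
  exact ⟨ρ, hρ.1, hρ.2, hlt⟩

lemma tendsto_one_add_rpow_neg_pow_sub_one {I : ℝ} (hI : 1 < I) :
    Tendsto (fun n : ℕ => (1 + (n : ℝ) ^ (-I)) ^ n - 1) atTop (𝓝 0) := by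
  have hmul : Tendsto (fun n : ℕ => (n : ℝ) * (n : ℝ) ^ (-I)) atTop (𝓝 0) := by
    refine ((tendsto_rpow_neg_atTop (sub_pos.2 hI)).comp tendsto_natCast_atTop_atTop).congr' ?_
    filter_upwards [eventually_gt_atTop 0] with n hn
    have hn' : (0 : ℝ) < n := Nat.cast_pos.2 hn
    rw [Function.comp_apply, neg_sub, sub_eq_add_neg, Real.rpow_add hn', Real.rpow_one]
  simpa using (Real.tendsto_one_add_pow_exp_of_tendsto hmul).sub_const 1

lemma tendsto_pow_mul_rpow_neg_pow {C c : ℝ} (hC : 0 ≤ C) (hc : 0 < c) :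
    Tendsto (fun n : ℕ => C ^ n * ((n : ℝ) ^ (-c)) ^ n) atTop (𝓝 0) := by
  have hbase : Tendsto (fun n : ℕ => C * (n : ℝ) ^ (-c)) atTop (𝓝 0) := by
    simpa using ((tendsto_rpow_neg_atTop hc).comp tendsto_natCast_atTop_atTop).const_mul C
  refine squeeze_zero' (Eventually.of_forall fun n => by positivity) ?_ hbase
  filter_upwards [hbase.eventually_le_const zero_lt_one, eventually_ne_atTop 0] with n hle hn
  rw [← mul_pow]
  exact pow_le_of_le_one (by positivity) hle hn

variable {k : ℕ} {α β : ℝ}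

lemma eventually_bhattacharyya_hypProb_pParam_le (hk : 2 ≤ k) (hα : 0 ≤ α) (hβ : 0 ≤ β) {ρ : ℝ}
    (hρ₀ : 0 ≤ ρ) (hρ : ρ < 1 / 2) :
    ∀ᶠ n in atTop, ∀ σ τ : Fin n → Bool, balanced σ → balanced τ → 2 * hammingDist σ τ ≤ n →
      bhattacharyya (hypProb (k := k) (pParam k α n) (pParam k β n) σ)
          (hypProb (pParam k α n) (pParam k β n) τ) ≤
        ((n : ℝ) ^ (-((√α - √β) ^ 2 * ρ ^ (k - 1)))) ^ hammingDist σ τ +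
          ((n : ℝ) ^ (-((√α - √β) ^ 2 * (1 / 8) ^ (k - 1) * (1 / 2 - ρ)))) ^ n := by
  have hbig : ∀ {ε : ℝ}, 0 < ε → ∀ᶠ n : ℕ in atTop, ((k - 1 : ℕ) : ℝ) ≤ ε * n := fun hε =>
    (tendsto_natCast_atTop_atTop.const_mul_atTop hε).eventually_ge_atTop _
  filter_upwards [eventually_pParam_mem_Icc hk hα, eventually_pParam_mem_Icc hk hβ,
    hbig (ε := (1 / 2 - ρ) / 2) (by linarith), hbig (ε := 1 / 8) (by norm_num),
    eventually_ge_atTop 1] with n hp hq hn_near hn_far hn σ τ hσ hτ hd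
  have hd' : (2 * hammingDist σ τ : ℝ) ≤ n := by exact_mod_cast hd
  have hn' : (1 : ℝ) ≤ n := by exact_mod_cast hn
  rcases le_total (hammingDist σ τ : ℝ) ((1 / 2 - ρ) * n) with hnear | hfar
  · exact (bhattacharyya_hypProb_pParam_le hk hα hβ hp hq hρ₀ hσ hτ (by linarith)).trans
      (le_add_of_nonneg_right (by positivity))
  · refine le_add_of_nonneg_of_le (by positivity) ?_
    refine (bhattacharyya_hypProb_pParam_le hk hα hβ hp hq (ρ := 1 / 8) (by norm_num) hσ hτ
      (by linarith)).trans ?_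
    rw [← Real.rpow_mul_natCast n.cast_nonneg, ← Real.rpow_mul_natCast n.cast_nonneg]
    refine Real.rpow_le_rpow_of_exponent_le hn' ?_
    rw [neg_mul, neg_mul, neg_le_neg_iff, mul_assoc _ (1 / 2 - ρ)]
    gcongr

lemma tendsto_prEvent_mle_error (hk : 2 ≤ k) (hα : 0 ≤ α) (hβ : 0 ≤ β)
    (hI : 1 < (√α - √β) ^ 2 / 2 ^ (k - 1)) {est : ∀ n, (KSet n k → Bool) → Fin n → Bool}
    (hest : ∀ n, IsMLE (pParam k α n) (pParam k β n) (est n)) :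
    Tendsto (fun n => prEvent n k (pParam k α n) (pParam k β n)
      (fun σ E => est n E ≠ σ ∧ est n E ≠ negB σ)) atTop (𝓝 0) := by
  obtain ⟨ρ, hρ₀, hρ, hIρ⟩ := exists_lt_half_one_lt_mul_pow hI
  have hJ : 0 < (√α - √β) ^ 2 := pos_of_mul_pos_left (one_pos.trans hIρ) (by positivity)
  have hc : 0 < (√α - √β) ^ 2 * (1 / 8) ^ (k - 1) * (1 / 2 - ρ) :=
    mul_pos (by positivity) (sub_pos.2 hρ)
  have hlim := (tendsto_one_add_rpow_neg_pow_sub_one hIρ).add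
    (tendsto_pow_mul_rpow_neg_pow zero_le_two hc)
  rw [add_zero] at hlim
  have hp := eventually_pParam_mem_Icc hk hα
  have hq := eventually_pParam_mem_Icc hk hβ
  refine squeeze_zero' ?_ ?_ hlim
  · filter_upwards [hp, hq] with n hp hq using prEvent_nonneg hp hq _
  · filter_upwards [hp, hq, eventually_bhattacharyya_hypProb_pParam_le hk hα hβ hρ₀.le hρ]
      with n hp hq hxy
    exact (hest n).prEvent_error_le hp hq (by positivity) (by positivity) hxy

end Asymptotics

/-- If `I(α,β) > 1` then exact recovery in `HSBM(n,p,q;k)` is possible: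
there is an estimator whose failure probability vanishes as `n = 2m → ∞`. -/
theorem hsbm_exact_recovery_possible (k : ℕ) (hk : 2 ≤ k) (α β : ℝ) (hα : 0 < α) (hβ : 0 < β)
    (hI : 1 < (Real.sqrt α - Real.sqrt β) ^ 2 / 2 ^ (k - 1)) :
    ∃ est : (m : ℕ) → (KSet (2 * m) k → Bool) → (Fin (2 * m) → Bool),
      Tendsto (fun m : ℕ =>
          prEvent (2 * m) k (pParam k α (2 * m)) (pParam k β (2 * m))
            (fun σ E => est m E ≠ σ ∧ est m E ≠ negB σ))
        atTop (nhds 0) := by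
  choose est hest using fun n => exists_isMLE n k (pParam k α n) (pParam k β n)
  exact ⟨fun m => est (2 * m), (tendsto_prEvent_mle_error hk hα.le hβ.le hI hest).comp
    (tendsto_id.const_mul_atTop' two_pos)⟩
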